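/- Let (RB, f^K) be a modal relativized Boolean algebra and let u ∈ F^RB. Then R^RB(u) ⊆ {v ∈ F^RB : X ∈ v} if and only if f^K(X) ∈ u, where u R^RB v iff for all Y, f^K(Y) ∈ u implies Y ∈ v. -/

import Mathlib

/-!
If `f^K(X) ∈ u`, then `X` lies in every `v` related to `u` by definition of the relation.

Conversely, suppose `f^K(X) ∉ u`. The set `F = {Y : f^K(Y) ∈ u}` is a strongly proper filter
(by `f2`, `f3` and `fD`) that omits `X`, and any member of `F^RB` extending `F` is related to `u`.
Unlike in a Boolean algebra, a filter carries a *support*, the set of its elements `1_Y`; `F` need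
not have the same support as `u`, since `f^K(1_Y) = 1_Y` can fail. The main tool is therefore
`exists_FRB_extension`: every strongly proper filter extends, by Zorn's lemma, to an element of
`F^RB` with the same support.

* If `1_X ∉ F`, extend `F` itself: the extension omits `1_X`, hence `X`.
* If `1_X ∈ F`, first adjoin `¬X`. The result is still strongly proper, because
  `W ∧ ¬X ≤ 0_T` with `W ∈ F` forces `W ∧ 1_X ≤ X` (`meet_one_le_compl`), hence `X ∈ F`.
  Its extension contains `¬X`, so it omits `X`.
-/

structure RBA (α : Type*) where
  meet : α → α → α
  join : α → α → α
  compl : α → α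
  bot : α
  top : α
  meet_assoc : ∀ x y z, meet (meet x y) z = meet x (meet y z)
  meet_comm : ∀ x y, meet x y = meet y x
  join_assoc : ∀ x y z, join (join x y) z = join x (join y z)
  join_comm : ∀ x y, join x y = join y x
  meet_distrib : ∀ x y z, meet x (join y z) = join (meet x y) (meet x z)
  join_distrib : ∀ x y z, join x (meet y z) = meet (join x y) (join x z)
  demorgan_meet : ∀ x y, compl (meet x y) = join (compl x) (compl y)
  demorgan_join : ∀ x y, compl (join x y) = meet (compl x) (compl y)
  meet_idem : ∀ x, meet x x = x
  join_idem : ∀ x, join x x = x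
  meet_top : ∀ x, meet x top = x
  compl_compl : ∀ x, compl (compl x) = x
  join_top : ∀ x, join x top = join x (compl x)
  meet_bot : ∀ x, meet x bot = bot
  rb5 : ∀ x y,
    meet (join x (compl x)) (join y (compl y)) = join x (compl x) →
    compl (meet y (join x (compl x))) = meet (compl y) (join x (compl x))

namespace RBA
variable {α : Type*}

/-- `1_X := X ∨ ¬X` -/
def one (R : RBA α) (x : α) : α := R.join x (R.compl x)

/-- `0_X := X ∧ ¬X` -/
def zero (R : RBA α) (x : α) : α := R.meet x (R.compl x)

/-- `ge R y x` means `y ≥ x`, i.e. `x ∧ y = x`. -/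
def ge (R : RBA α) (y x : α) : Prop := R.meet x y = x

end RBA

namespace RBA
variable {α : Type*}

/-- A filter on an RBA: contains `1`, upward closed under `≥`, closed under `∧`. -/
def IsFilter (R : RBA α) (u : Set α) : Prop :=
  R.top ∈ u ∧ (∀ x y, x ∈ u → R.ge y x → y ∈ u) ∧
    (∀ x y, x ∈ u → y ∈ u → R.meet x y ∈ u)

/-- A strongly proper set: contains no element of the form `X ∧ ¬X`. -/
def StronglyProper (R : RBA α) (u : Set α) : Prop := ∀ x, R.zero x ∉ u

/-- `π₁(X) := {Z : 1_Z = 1_X}`. -/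
def pi1 (R : RBA α) (x : α) : Set α := {z | R.one z = R.one x}

/-- `π₂(u) := {1_X : X ∈ RB} ∩ u`. -/
def pi2 (R : RBA α) (u : Set α) : Set α := {z | z ∈ u ∧ ∃ x, z = R.one x}

/-- A filter of the Boolean algebra `π₁(X)` (top element `1_X`). -/
def IsFilterOn (R : RBA α) (x : α) (w : Set α) : Prop :=
  w ⊆ R.pi1 x ∧ R.one x ∈ w ∧
    (∀ a b, a ∈ w → b ∈ R.pi1 x → R.ge b a → b ∈ w) ∧
    (∀ a b, a ∈ w → b ∈ w → R.meet a b ∈ w)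

/-- An ultrafilter of the Boolean algebra `π₁(X)`: a strongly proper filter of `π₁(X)`
maximal among strongly proper filters of `π₁(X)`. -/
def IsUltraOn (R : RBA α) (x : α) (w : Set α) : Prop :=
  R.IsFilterOn x w ∧ (∀ a ∈ R.pi1 x, R.zero a ∉ w) ∧
    ∀ v, R.IsFilterOn x v → (∀ a ∈ R.pi1 x, R.zero a ∉ v) → w ⊆ v → w = v

/-- `F^RB`: filters `u` such that for every `X` with `1_X ∈ u`,
`u ∩ π₁(X)` is an ultrafilter of the Boolean algebra `π₁(X)`. -/
def FRB (R : RBA α) : Set (Set α) :=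
  {u | R.IsFilter u ∧ ∀ x, R.one x ∈ u → R.IsUltraOn x (u ∩ R.pi1 x)}

end RBA

/-- A modal relativized Boolean algebra. -/
structure MRBA (α : Type*) extends RBA α where
  fK : α → α
  f1 : ∀ x, toRBA.one (fK x) = toRBA.one x
  f2 : fK toRBA.top = toRBA.top
  f3 : ∀ x y, fK (toRBA.meet x y) = toRBA.meet (fK x) (fK y)
  fD : ∀ x, fK (toRBA.zero x) = toRBA.zero x

/-- The canonical relation `R^RB` on `F^RB`: `u R^RB v` iff `f^K(Y) ∈ u` implies `Y ∈ v`. -/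
def RRel {α : Type*} (M : MRBA α) (u v : Set α) : Prop :=
  ∀ y, M.fK y ∈ u → y ∈ v

namespace RBA
variable {α : Type*} (R : RBA α)

theorem one_eq (x : α) : R.one x = R.join x R.top := (R.join_top x).symm

theorem one_one (x : α) : R.one (R.one x) = R.one x := by
  rw [R.one_eq, R.one_eq, R.join_assoc, R.join_idem]

theorem one_compl (x : α) : R.one (R.compl x) = R.one x := by
  unfold one; rw [R.compl_compl, R.join_comm]

theorem one_meet (x y : α) : R.one (R.meet x y) = R.meet (R.one x) (R.one y) := by
  simp only [one_eq]
  rw [R.join_comm, R.join_distrib, R.join_comm x, R.join_comm y]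

theorem one_zero (x : α) : R.one (R.zero x) = R.one x := by
  unfold zero; rw [R.one_meet, R.one_compl, R.meet_idem]

/-- `0_X = ¬1_X`; in particular `0_X` depends only on `1_X`. -/
theorem zero_eq (x : α) : R.zero x = R.compl (R.one x) := by
  unfold zero one; rw [R.demorgan_join, R.compl_compl, R.meet_comm]

theorem meet_one_self (x : α) : R.meet x (R.one x) = x := by
  rw [R.one_eq, R.meet_distrib, R.meet_idem, R.meet_top, R.join_idem]

theorem zero_join_self (x : α) : R.join (R.zero x) x = x := by
  unfold zero
  rw [R.join_comm, R.join_distrib, R.join_idem]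
  exact R.meet_one_self x

theorem meet_zero_self (x : α) : R.meet x (R.zero x) = R.zero x := by
  unfold zero; rw [← R.meet_assoc, R.meet_idem]

theorem ge_trans {x y z : α} (h : R.ge z y) (h' : R.ge y x) : R.ge z x := by
  unfold ge at *; rw [← h', R.meet_assoc, h]

theorem ge_refl (x : α) : R.ge x x := R.meet_idem x

theorem ge_meet_left (x y : α) : R.ge x (R.meet x y) := by
  unfold ge; rw [R.meet_comm, ← R.meet_assoc, R.meet_idem]

theorem ge_meet_right (x y : α) : R.ge y (R.meet x y) := by
  unfold ge; rw [R.meet_assoc, R.meet_idem]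

theorem one_mono {x y : α} (h : R.ge y x) : R.ge (R.one y) (R.one x) := by
  unfold ge at *; rw [← R.one_meet, h]

/-- If `W ∧ Z` lies below some `0_T`, then the part of `W` below `1_Z` lies below `¬Z`.
Here `rb5` enters, to transport `0_T` down to `0_P` with `P = W ∧ 1_Z`. -/
theorem meet_one_le_compl {w z t : α} (h : R.ge (R.zero t) (R.meet w z)) :
    R.ge (R.compl z) (R.meet w (R.one z)) := by
  set p := R.meet w (R.one z) with hp
  have hpz : R.meet p z = R.meet w z := by
    rw [hp, R.meet_assoc, R.meet_comm (R.one z), R.meet_one_self]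
  have hpo : R.meet p (R.one z) = p := by rw [hp, R.meet_assoc, R.meet_idem]
  have hop : R.one p = R.one (R.meet w z) := by rw [hp, R.one_meet, R.one_one, R.one_meet]
  have hjt : R.meet (R.one p) (R.one t) = R.one p := by
    have := R.one_mono h
    rwa [R.one_zero, ← hop] at this
  have hzt : R.meet (R.zero t) (R.one p) = R.zero p := by
    have h5 := R.rb5 p (R.one t)
    change R.meet (R.one p) (R.one (R.one t)) = R.one p →
      R.compl (R.meet (R.one t) (R.one p)) = R.meet (R.compl (R.one t)) (R.one p) at h5
    rw [R.one_one] at h5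
    rw [R.zero_eq, ← h5 hjt, R.meet_comm, hjt, R.zero_eq]
  -- in the Boolean algebra `π₁(P)`, the elements `P` and `Z ∧ 1_P` are disjoint
  have hdisj : R.meet p z = R.zero p := by
    have h0 : R.zero (R.meet w z) = R.zero p := by rw [R.zero_eq, R.zero_eq, hop]
    have h1 : R.meet (R.meet w z) (R.zero p) = R.meet w z := by
      rw [← hzt, ← R.meet_assoc]
      rw [show R.meet (R.meet w z) (R.zero t) = R.meet w z from h, hop, R.meet_one_self]
    rw [hpz, ← h1, ← h0, R.meet_zero_self]
  have hoq : R.zero (R.meet p (R.compl z)) = R.zero p := by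
    rw [R.zero_eq, R.zero_eq, R.one_meet, R.one_compl, ← R.one_one z, ← R.one_meet, hpo]
  change R.meet p (R.compl z) = p
  calc R.meet p (R.compl z)
      = R.join (R.zero p) (R.meet p (R.compl z)) := by rw [← hoq, R.zero_join_self]
    _ = R.meet p (R.one z) := by rw [← hdisj, ← R.meet_distrib]; rfl
    _ = p := hpo

variable {R}

theorem IsFilter.one_mem {F : Set α} (hF : R.IsFilter F) {x : α} (hx : x ∈ F) : R.one x ∈ F :=
  hF.2.1 _ _ hx (R.meet_one_self x)

/-- The filter generated by a filter `F` and an element `z`. -/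
def adjoin (R : RBA α) (F : Set α) (z : α) : Set α := {t | ∃ w ∈ F, R.ge t (R.meet w z)}

theorem subset_adjoin (F : Set α) (z : α) : F ⊆ R.adjoin F z :=
  fun w hw => ⟨w, hw, R.ge_meet_left w z⟩

theorem mem_adjoin {F : Set α} (hF : R.IsFilter F) (z : α) : z ∈ R.adjoin F z :=
  ⟨R.top, hF.1, R.ge_meet_right _ z⟩

theorem isFilter_adjoin {F : Set α} (hF : R.IsFilter F) (z : α) : R.IsFilter (R.adjoin F z) := by
  refine ⟨subset_adjoin F z hF.1, ?_, ?_⟩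
  · rintro x y ⟨w, hw, h⟩ hxy
    exact ⟨w, hw, R.ge_trans hxy h⟩
  · rintro x y ⟨w, hw, h⟩ ⟨w', hw', h'⟩
    refine ⟨R.meet w w', hF.2.2 _ _ hw hw', ?_⟩
    have hx : R.ge x (R.meet (R.meet w w') z) := by
      refine R.ge_trans h ?_
      have := R.ge_meet_left (R.meet w z) w'
      rwa [R.meet_assoc, R.meet_comm z, ← R.meet_assoc] at this
    have hy : R.ge y (R.meet (R.meet w w') z) := by
      refine R.ge_trans h' ?_
      rw [R.meet_assoc]
      exact R.ge_meet_right _ _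
    unfold ge at *
    rw [← R.meet_assoc, hx, hy]

/-- Adjoining an element of a fibre `π₁(Z)` with `1_Z ∈ F` does not enlarge the support of `F`. -/
theorem one_mem_of_mem_adjoin {F : Set α} (hF : R.IsFilter F) {z t : α} (hz : R.one z ∈ F)
    (ht : t ∈ R.adjoin F z) : R.one t ∈ F := by
  obtain ⟨w, hw, h⟩ := ht
  refine hF.2.1 _ _ ?_ (R.one_mono h)
  rw [R.one_meet]
  exact hF.2.2 _ _ (hF.one_mem hw) hz

theorem stronglyProper_adjoin {F : Set α} (hF : R.IsFilter F) {z : α} (hz : R.one z ∈ F)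
    (hc : R.compl z ∉ F) : R.StronglyProper (R.adjoin F z) := by
  rintro t ⟨w, hw, h⟩
  exact hc (hF.2.1 _ _ (hF.2.2 _ _ hw hz) (R.meet_one_le_compl h))

/-- A strongly proper filter that decides every element of its supporting fibres is in `F^RB`. -/
theorem mem_FRB_of_decides {v : Set α} (hv : R.IsFilter v) (hp : R.StronglyProper v)
    (hd : ∀ z, R.one z ∈ v → z ∉ v → R.compl z ∈ v) : v ∈ R.FRB := by
  refine ⟨hv, fun x hx => ⟨⟨Set.inter_subset_right, ⟨hx, R.one_one x⟩, ?_, ?_⟩, ?_, ?_⟩⟩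
  · rintro a b ⟨ha, -⟩ hb hab
    exact ⟨hv.2.1 _ _ ha hab, hb⟩
  · rintro a b ⟨ha, ha'⟩ ⟨hb, hb'⟩
    refine ⟨hv.2.2 _ _ ha hb, ?_⟩
    change R.one _ = _
    rw [R.one_meet, ha', hb', R.meet_idem]
  · rintro a - ⟨h, -⟩
    exact hp a h
  · intro w hw hwp hvw
    refine Set.Subset.antisymm hvw fun z hz => ?_
    have hz1 : R.one z = R.one x := hw.1 hz
    refine ⟨?_, hz1⟩
    by_contra hzv
    have hc := hd z (hz1 ▸ hx) hzv
    exact hwp z hz1 (hw.2.2.2 _ _ hz (hvw ⟨hc, (R.one_compl z).trans hz1⟩))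

/-- Every strongly proper filter extends to an element of `F^RB` with the same support. -/
theorem exists_FRB_extension {F : Set α} (hF : R.IsFilter F) (hp : R.StronglyProper F) :
    ∃ v ∈ R.FRB, F ⊆ v ∧ R.StronglyProper v ∧ ∀ z ∈ v, R.one z ∈ F := by
  -- the support has to be bounded in the family given to Zorn, since otherwise it could grow
  obtain ⟨v, hFv, hv⟩ := zorn_subset_nonempty
    {G : Set α | R.IsFilter G ∧ R.StronglyProper G ∧ ∀ z ∈ G, R.one z ∈ F}
    (by
      intro c hc hchain hne
      obtain ⟨G₀, hG₀⟩ := hne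
      refine ⟨⋃₀ c, ⟨⟨⟨G₀, hG₀, (hc hG₀).1.1⟩, ?_, ?_⟩, ?_, ?_⟩,
        fun s hs => Set.subset_sUnion_of_mem hs⟩
      · rintro x y ⟨G, hG, hx⟩ hxy
        exact ⟨G, hG, (hc hG).1.2.1 _ _ hx hxy⟩
      · rintro x y ⟨G, hG, hx⟩ ⟨H, hH, hy⟩
        rcases hchain.total hG hH with h | h
        · exact ⟨H, hH, (hc hH).1.2.2 _ _ (h hx) hy⟩
        · exact ⟨G, hG, (hc hG).1.2.2 _ _ hx (h hy)⟩
      · rintro x ⟨G, hG, hx⟩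
        exact (hc hG).2.1 x hx
      · rintro z ⟨G, hG, hz⟩
        exact (hc hG).2.2 z hz)
    F ⟨hF, hp, fun z hz => hF.one_mem hz⟩
  obtain ⟨hvf, hvp, hvs⟩ := hv.prop
  refine ⟨v, mem_FRB_of_decides hvf hvp ?_, hFv, hvp, hvs⟩
  intro z hz hzv
  by_contra hc
  refine hzv (hv.le_of_ge ⟨isFilter_adjoin hvf z, stronglyProper_adjoin hvf hz hc, ?_⟩
    (subset_adjoin v z) (mem_adjoin hvf z))
  intro t ht
  have := hvs _ (one_mem_of_mem_adjoin hvf hz ht)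
  rwa [R.one_one] at this

theorem stronglyProper_of_mem_FRB {u : Set α} (hu : u ∈ R.FRB) : R.StronglyProper u := by
  intro t ht
  have h1 : R.one t ∈ u := by
    have := hu.1.one_mem ht
    rwa [R.one_zero] at this
  exact (hu.2 t h1).2.1 t rfl ⟨ht, R.one_zero t⟩

end RBA

/-- For `u ∈ F^RB`: `R^RB(u) ⊆ {v ∈ F^RB : X ∈ v}` iff `f^K(X) ∈ u`. -/
theorem stmt14 {α : Type*} (M : MRBA α) (u : Set α)
    (hu : u ∈ M.toRBA.FRB) (X : α) :
    (∀ v ∈ M.toRBA.FRB, RRel M u v → X ∈ v) ↔ M.fK X ∈ u := by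
  refine ⟨fun hall => ?_, fun h v _ huv => huv X h⟩
  by_contra hX
  let F : Set α := {y | M.fK y ∈ u}
  have hF : M.toRBA.IsFilter F := by
    refine ⟨?_, ?_, ?_⟩
    · change M.fK _ ∈ u
      rw [M.f2]
      exact hu.1.1
    · intro x y hx hxy
      refine hu.1.2.1 _ _ hx ?_
      unfold RBA.ge at *
      rw [← M.f3, hxy]
    · intro x y hx hy
      change M.fK _ ∈ u
      rw [M.f3]
      exact hu.1.2.2 _ _ hx hy
  have hp : M.toRBA.StronglyProper F := by
    intro t ht
    change M.fK _ ∈ u at ht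
    rw [M.fD] at ht
    exact RBA.stronglyProper_of_mem_FRB hu t ht
  by_cases h1 : M.toRBA.one X ∈ F
  · have hc : M.toRBA.compl (M.toRBA.compl X) ∉ F := by rwa [M.compl_compl]
    rw [← M.toRBA.one_compl] at h1
    obtain ⟨v, hv, hFv, hvp, -⟩ := RBA.exists_FRB_extension
      (RBA.isFilter_adjoin hF (M.compl X)) (RBA.stronglyProper_adjoin hF h1 hc)
    have hXv := hall v hv fun y hy => hFv (RBA.subset_adjoin F _ hy)
    exact hvp X (hv.1.2.2 _ _ hXv (hFv (RBA.mem_adjoin hF _)))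
  · obtain ⟨v, hv, hFv, -, hvs⟩ := RBA.exists_FRB_extension hF hp
    exact h1 (hvs X (hall v hv fun y hy => hFv hy))
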